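/- Let d ≥ 2 and α > −1 with p₀ := d/(1+α) > 1. Then there exist a constant C > 0 and a function f : ℝ^d → ℝ, not almost everywhere zero, defined on the exterior domain D = {x : |x| ≥ 1}, vanishing for 1 ≤ |x| ≤ e/2, continuously differentiable on the interior of D, such that for every p ∈ (p₀, ∞): ( ∫_D ( |f(x)| · |x|^{−1−α} )^p dx )^{1/p} ≥ C · ( p/(p(1+α) − d) ) · ( ∫_D ( |grad f(x)| · |x|^{−α} )^p dx )^{1/p}, with both sides finite. Consequently the constant p/|d − p(1+α)| in the weighted Poincaré inequality on an unbounded domain cannot be improved either as p → p₀ from above or as p → ∞. -/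

import Mathlib

open MeasureTheory Set ENNReal

theorem aux_gamma (p : ℝ) (hp : 1 < p) :
    p ^ p * Real.Gamma (p + 1) ≤ Real.Gamma (2 * p + 1) := by
  have h := Real.convexOn_log_Gamma.secant_mono_aux1 (x := p + 1) (y := p + 2) (z := 2 * p + 1)
    (by simp only [mem_Ioi]; linarith) (by simp only [mem_Ioi]; linarith) (by linarith) (by linarith)
  have h1 : 0 < Real.Gamma (p + 1) := Real.Gamma_pos_of_pos (by linarith)
  have h2 : 0 < Real.Gamma (2 * p + 1) := Real.Gamma_pos_of_pos (by linarith)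
  have h3 : Real.Gamma (p + 2) = (p + 1) * Real.Gamma (p + 1) := by
    rw [← Real.Gamma_add_one (by linarith)]; congr 1; ring
  simp only [Function.comp_apply] at h
  rw [h3, Real.log_mul (by linarith) h1.ne'] at h
  have h4 : Real.log p ≤ Real.log (p + 1) := Real.log_le_log (by linarith) (by linarith)
  have hpp : 0 < p ^ p := Real.rpow_pos_of_pos (by linarith) _
  rw [← Real.log_le_log_iff (by positivity) h2, Real.log_mul hpp.ne' h1.ne',
    Real.log_rpow (by linarith)]
  nlinarith

theorem aux_sq (u : ℝ) : HasDerivAt (fun t : ℝ => (max t 0) ^ 2) (2 * max u 0) u := by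
  rcases lt_trichotomy u 0 with hu | hu | hu
  · rw [max_eq_right hu.le, mul_zero]
    refine (hasDerivAt_const u (0 : ℝ)).congr_of_eventuallyEq ?_
    filter_upwards [Iio_mem_nhds hu] with t ht
    rw [max_eq_right (le_of_lt ht)]; simp
  · subst hu
    rw [hasDerivAt_iff_isLittleO]
    simp only [max_self, mul_zero, smul_zero, sub_zero]
    have h : (fun t : ℝ => t ^ 2) =o[nhds 0] fun t => t := by
      simpa using Asymptotics.isLittleO_pow_pow (𝕜 := ℝ) (m := 1) (n := 2) (by norm_num)
    refine Asymptotics.IsBigO.trans_isLittleO ?_ h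
    refine Asymptotics.IsBigO.of_bound 1 (Filter.Eventually.of_forall fun t => ?_)
    rcases le_total t 0 with ht | ht <;> simp [ht]
    positivity
  · rw [max_eq_left hu.le]
    have := hasDerivAt_pow 2 u
    simp only [Nat.cast_ofNat, Nat.add_one_sub_one, pow_one] at this
    refine this.congr_of_eventuallyEq ?_
    filter_upwards [Ioi_mem_nhds hu] with t ht
    rw [max_eq_left (le_of_lt ht)]

theorem aux_contDiff : ContDiff ℝ 1 (fun t : ℝ => (max t 0) ^ 2) := by
  rw [contDiff_one_iff_deriv]
  refine ⟨fun u => (aux_sq u).differentiableAt, ?_⟩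
  have : deriv (fun t : ℝ => (max t 0) ^ 2) = fun u => 2 * max u 0 :=
    funext fun u => (aux_sq u).deriv
  rw [this]; fun_prop

theorem aux_one_dim (d : ℕ) (hd : 2 ≤ d) (a q b : ℝ) (hq : 0 < q) (hb : (d : ℝ) < b) :
    ∫ y in Ioi (0 : ℝ), y ^ (d - 1) • ((max (Real.log y - a) 0) ^ q * y ^ (-b)) =
      Real.exp (-(b - d) * a) * ((1 / (b - d)) ^ (q + 1) * Real.Gamma (q + 1)) := by
  have h1 : ∫ y in Ioi (Real.exp a), y ^ (d - 1) • ((max (Real.log y - a) 0) ^ q * y ^ (-b)) =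
      ∫ y in Ioi (0 : ℝ), y ^ (d - 1) • ((max (Real.log y - a) 0) ^ q * y ^ (-b)) := by
    symm
    refine setIntegral_eq_of_subset_of_forall_sdiff_eq_zero measurableSet_Ioi
      (Ioi_subset_Ioi (Real.exp_pos a).le) ?_
    rintro y ⟨hy, hy'⟩
    simp only [mem_Ioi, not_lt] at hy hy'
    have : Real.log y ≤ a := (Real.log_le_iff_le_exp hy).2 hy'
    rw [max_eq_right (by linarith), Real.zero_rpow hq.ne']; simp
  have h2 : Ioi (Real.exp a) = (fun s => Real.exp (s + a)) '' Ioi 0 := by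
    ext y
    simp only [mem_Ioi, mem_image]
    constructor
    · intro hy
      have hy0 : 0 < y := (Real.exp_pos a).trans hy
      refine ⟨Real.log y - a, ?_, ?_⟩
      · have := (Real.lt_log_iff_exp_lt hy0).2 hy
        linarith
      · rw [sub_add_cancel, Real.exp_log hy0]
    · rintro ⟨s, hs, rfl⟩
      exact Real.exp_lt_exp.2 (by linarith)
  rw [← h1, h2, integral_image_eq_integral_abs_deriv_smul (f' := fun s => Real.exp (s + a))
    measurableSet_Ioi]
  · rw [← Real.integral_rpow_mul_exp_neg_mul_Ioi (by linarith) (by linarith),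
      ← integral_const_mul]
    refine setIntegral_congr_fun measurableSet_Ioi fun s hs => ?_
    simp only [mem_Ioi] at hs
    simp only [Real.log_exp, smul_eq_mul, add_sub_cancel_right]
    rw [max_eq_left hs.le, abs_of_pos (Real.exp_pos _), ← Real.exp_mul, ← Real.exp_nat_mul,
      Nat.cast_sub (by omega)]
    have : Real.exp (s + a) * (Real.exp (((d : ℝ) - (1 : ℕ)) * (s + a)) *
        Real.exp ((s + a) * -b)) = Real.exp (-(b - d) * a) * Real.exp (-((b - d) * s)) := by
      rw [← Real.exp_add, ← Real.exp_add, ← Real.exp_add]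
      congr 1; push_cast; ring
    linear_combination (s ^ q) * this
  · intro s _
    have := ((hasDerivAt_id s).add_const a).exp
    simpa using this.hasDerivWithinAt
  · intro s _ t _ hst
    have := Real.exp_injective hst
    linarith

theorem aux_lintegral (d : ℕ) (hd : 2 ≤ d) (a q b : ℝ) (ha : 0 < a) (hq : 0 < q)
    (hb : (d : ℝ) < b) :
    ∫⁻ x in {x : EuclideanSpace ℝ (Fin d) | 1 ≤ ‖x‖},
      ENNReal.ofReal ((max (Real.log ‖x‖ - a) 0) ^ q * ‖x‖ ^ (-b)) =
    ENNReal.ofReal ((d * volume.real (Metric.ball (0 : EuclideanSpace ℝ (Fin d)) 1) *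
      Real.exp (-(b - d) * a)) * ((1 / (b - d)) ^ (q + 1) * Real.Gamma (q + 1))) := by
  have : Nonempty (Fin d) := ⟨⟨0, by omega⟩⟩
  have hI := integral_fun_norm_addHaar (volume : Measure (EuclideanSpace ℝ (Fin d)))
    (fun y : ℝ => (max (Real.log y - a) 0) ^ q * y ^ (-b))
  rw [finrank_euclideanSpace_fin, aux_one_dim d hd a q b hq hb] at hI
  have hv : 0 < volume.real (Metric.ball (0 : EuclideanSpace ℝ (Fin d)) 1) :=
    ENNReal.toReal_pos (Metric.measure_ball_pos _ _ one_pos).ne' measure_ball_lt_top.ne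
  have hG : 0 < Real.Gamma (q + 1) := Real.Gamma_pos_of_pos (by linarith)
  have he : 0 < b - d := by linarith
  have hd0 : 0 < (d : ℝ) := by positivity
  simp only [nsmul_eq_mul, smul_eq_mul] at hI
  have hint := Integrable.of_integral_ne_zero (by rw [hI]; positivity)
  have hms : MeasurableSet {x : EuclideanSpace ℝ (Fin d) | 1 ≤ ‖x‖} :=
    measurableSet_le measurable_const measurable_norm
  rw [← lintegral_indicator hms]
  have hind : ({x : EuclideanSpace ℝ (Fin d) | 1 ≤ ‖x‖}.indicator fun x =>
      ENNReal.ofReal ((max (Real.log ‖x‖ - a) 0) ^ q * ‖x‖ ^ (-b))) =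
      fun x => ENNReal.ofReal ((max (Real.log ‖x‖ - a) 0) ^ q * ‖x‖ ^ (-b)) := by
    funext x
    by_cases hx : 1 ≤ ‖x‖
    · exact indicator_of_mem (s := {x : EuclideanSpace ℝ (Fin d) | 1 ≤ ‖x‖}) hx _
    · rw [indicator_of_notMem (s := {x : EuclideanSpace ℝ (Fin d) | 1 ≤ ‖x‖}) hx]
      have : Real.log ‖x‖ ≤ 0 := Real.log_nonpos (norm_nonneg _) (not_le.1 hx).le
      rw [max_eq_right (by linarith), Real.zero_rpow hq.ne']; simp
  rw [hind, ← ofReal_integral_eq_lintegral_ofReal hint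
    (Filter.Eventually.of_forall fun x => by positivity), hI]
  congr 1; ring

theorem aux_fderiv (d : ℕ) (hd : 2 ≤ d) (a : ℝ) (x : EuclideanSpace ℝ (Fin d)) (hx : x ≠ 0) :
    ‖fderiv ℝ (fun x : EuclideanSpace ℝ (Fin d) => (max (Real.log ‖x‖ - a) 0) ^ 2) x‖ =
      2 * max (Real.log ‖x‖ - a) 0 * ‖x‖⁻¹ := by
  have : Nonempty (Fin d) := ⟨⟨0, by omega⟩⟩
  have hn : DifferentiableAt ℝ (fun x : EuclideanSpace ℝ (Fin d) => ‖x‖) x :=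
    differentiableAt_id.norm ℝ hx
  have h1 : HasDerivAt (fun r : ℝ => Real.log r - a) (‖x‖⁻¹) ‖x‖ :=
    (Real.hasDerivAt_log (norm_ne_zero_iff.2 hx)).sub_const a
  have h2 := (aux_sq (Real.log ‖x‖ - a)).comp ‖x‖ h1
  have h3 := h2.comp_hasFDerivAt x hn.hasFDerivAt
  have h4 := h3.fderiv
  simp only [Function.comp_def] at h4
  rw [h4, norm_smul, norm_fderiv_norm hn, mul_one, Real.norm_of_nonneg (by positivity)]

/-- Theorem 2.b (sharpness, unbounded case): for `d ≥ 2` and `α > −1` with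
`p₀ = d/(1+α) > 1`, there exist a constant `C > 0` and a function `f` on the exterior
domain `D = {|x| ≥ 1}`, not a.e. zero on `D`, vanishing for `1 ≤ |x| ≤ e/2`,
continuously differentiable on the interior of `D`, such that for every `p ∈ (p₀, ∞)`,
`( ∫_D (|f(x)|·|x|^{−1−α})^p dx )^{1/p}
   ≥ C·(p/(p(1+α) − d))·( ∫_D (|grad f(x)|·|x|^{−α})^p dx )^{1/p}`,
with both sides finite: the constant `p/|d − p(1+α)|` in the weighted Poincaré
inequality on an unbounded domain cannot be improved as `p → p₀⁺` or as `p → ∞`. -/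
theorem poincare_sharp_unbounded (d : ℕ) (hd : 2 ≤ d) (α : ℝ) (hα : -1 < α)
    (hp₀ : 1 < (d : ℝ) / (1 + α)) :
    ∃ C : ℝ, 0 < C ∧
    ∃ f : EuclideanSpace ℝ (Fin d) → ℝ,
      ¬ (∀ᵐ x ∂(volume.restrict {x : EuclideanSpace ℝ (Fin d) | 1 ≤ ‖x‖}), f x = 0) ∧
      (∀ x : EuclideanSpace ℝ (Fin d), 1 ≤ ‖x‖ → ‖x‖ ≤ Real.exp 1 / 2 → f x = 0) ∧
      ContDiffOn ℝ 1 f {x : EuclideanSpace ℝ (Fin d) | 1 < ‖x‖} ∧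
      ∀ p : ℝ, (d : ℝ) / (1 + α) < p →
        (∫⁻ x in {x : EuclideanSpace ℝ (Fin d) | 1 ≤ ‖x‖},
            ENNReal.ofReal ((|f x| * ‖x‖ ^ (-1 - α)) ^ p)) ^ (1 / p) ≠ ⊤ ∧
        (∫⁻ x in {x : EuclideanSpace ℝ (Fin d) | 1 ≤ ‖x‖},
            ENNReal.ofReal ((‖fderiv ℝ f x‖ * ‖x‖ ^ (-α)) ^ p)) ^ (1 / p) ≠ ⊤ ∧
        ENNReal.ofReal (C * (p / (p * (1 + α) - (d : ℝ)))) *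
            (∫⁻ x in {x : EuclideanSpace ℝ (Fin d) | 1 ≤ ‖x‖},
              ENNReal.ofReal ((‖fderiv ℝ f x‖ * ‖x‖ ^ (-α)) ^ p)) ^ (1 / p)
          ≤ (∫⁻ x in {x : EuclideanSpace ℝ (Fin d) | 1 ≤ ‖x‖},
              ENNReal.ofReal ((|f x| * ‖x‖ ^ (-1 - α)) ^ p)) ^ (1 / p) := by
  have hβ : 0 < 1 + α := by linarith
  set a : ℝ := 1 - Real.log 2 with ha_def
  have ha : 0 < a := by have := Real.log_two_lt_d9; rw [ha_def]; linarith
  have hexp : Real.log (Real.exp 1 / 2) = a := by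
    rw [Real.log_div (Real.exp_pos _).ne' two_ne_zero, Real.log_exp]
  have hd0 : 0 < (d : ℝ) := by positivity
  have hms : MeasurableSet {x : EuclideanSpace ℝ (Fin d) | 1 ≤ ‖x‖} :=
    measurableSet_le measurable_const measurable_norm
  have hv : 0 < volume.real (Metric.ball (0 : EuclideanSpace ℝ (Fin d)) 1) :=
    ENNReal.toReal_pos (Metric.measure_ball_pos _ _ one_pos).ne' measure_ball_lt_top.ne
  set f : EuclideanSpace ℝ (Fin d) → ℝ := fun x => (max (Real.log ‖x‖ - a) 0) ^ 2 with hf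
  have key1 : ∀ p : ℝ, (d : ℝ) / (1 + α) < p →
      ∫⁻ x in {x : EuclideanSpace ℝ (Fin d) | 1 ≤ ‖x‖},
        ENNReal.ofReal ((|f x| * ‖x‖ ^ (-1 - α)) ^ p) =
      ENNReal.ofReal ((d * volume.real (Metric.ball (0 : EuclideanSpace ℝ (Fin d)) 1) *
        Real.exp (-(p * (1 + α) - d) * a)) *
          ((1 / (p * (1 + α) - d)) ^ (2 * p + 1) * Real.Gamma (2 * p + 1))) := by
    intro p hp
    have hp1 : 1 < p := hp₀.trans hp
    have hb : (d : ℝ) < p * (1 + α) := (div_lt_iff₀ hβ).1 hp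
    rw [← aux_lintegral d hd a (2 * p) (p * (1 + α)) ha (by linarith) hb]
    refine setLIntegral_congr_fun hms fun x hx => ?_
    have hx0 : 0 ≤ ‖x‖ := norm_nonneg x
    have hm : 0 ≤ max (Real.log ‖x‖ - a) 0 := le_max_right _ _
    simp only [hf]
    rw [abs_of_nonneg (by positivity), Real.mul_rpow (by positivity) (by positivity),
      ← Real.rpow_mul hx0, ← Real.rpow_natCast, ← Real.rpow_mul hm]
    congr 3
    ring
  have key2 : ∀ p : ℝ, (d : ℝ) / (1 + α) < p →
      ∫⁻ x in {x : EuclideanSpace ℝ (Fin d) | 1 ≤ ‖x‖},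
        ENNReal.ofReal ((‖fderiv ℝ f x‖ * ‖x‖ ^ (-α)) ^ p) =
      ENNReal.ofReal (2 ^ p * ((d * volume.real (Metric.ball (0 : EuclideanSpace ℝ (Fin d)) 1) *
        Real.exp (-(p * (1 + α) - d) * a)) *
          ((1 / (p * (1 + α) - d)) ^ (p + 1) * Real.Gamma (p + 1)))) := by
    intro p hp
    have hp1 : 1 < p := hp₀.trans hp
    have hb : (d : ℝ) < p * (1 + α) := (div_lt_iff₀ hβ).1 hp
    rw [ENNReal.ofReal_mul (by positivity),
      ← aux_lintegral d hd a p (p * (1 + α)) ha (by linarith) hb,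
      ← lintegral_const_mul' _ _ ENNReal.ofReal_ne_top]
    refine setLIntegral_congr_fun hms fun x hx => ?_
    simp only [mem_ofPred_eq] at hx
    have hx0 : 0 < ‖x‖ := by linarith
    have hm : 0 ≤ max (Real.log ‖x‖ - a) 0 := le_max_right _ _
    simp only [hf]
    rw [aux_fderiv d hd a x (norm_pos_iff.1 hx0), ← ENNReal.ofReal_mul (by positivity),
      mul_assoc _ (‖x‖⁻¹), ← Real.rpow_neg_one, ← Real.rpow_add hx0,
      Real.mul_rpow (by positivity) (by positivity), Real.mul_rpow (by positivity) hm,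
      ← Real.rpow_mul hx0.le, mul_assoc]
    congr 4
    ring
  refine ⟨1 / 2, by norm_num, f, ?_, ?_, ?_, ?_⟩
  · intro h0
    have hp : (d : ℝ) / (1 + α) < d / (1 + α) + 1 := by linarith
    have hk := key1 _ hp
    generalize (d : ℝ) / (1 + α) + 1 = p at hp hk
    have hp1 : 1 < p := hp₀.trans hp
    have hb : (d : ℝ) < p * (1 + α) := (div_lt_iff₀ hβ).1 hp
    have hz : ∫⁻ x in {x : EuclideanSpace ℝ (Fin d) | 1 ≤ ‖x‖},
        ENNReal.ofReal ((|f x| * ‖x‖ ^ (-1 - α)) ^ p) = 0 := by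
      rw [← lintegral_zero (μ := volume.restrict {x : EuclideanSpace ℝ (Fin d) | 1 ≤ ‖x‖})]
      refine lintegral_congr_ae ?_
      filter_upwards [h0] with x hx
      rw [hx, abs_zero, zero_mul, Real.zero_rpow (by linarith), ENNReal.ofReal_zero]
    rw [hz] at hk
    have hG : 0 < Real.Gamma (2 * p + 1) := Real.Gamma_pos_of_pos (by linarith)
    have he : 0 < p * (1 + α) - d := by linarith
    exact (ENNReal.ofReal_pos.2 (by positivity)).ne hk
  · intro x h1 h2
    have : Real.log ‖x‖ ≤ a := hexp ▸ Real.log_le_log (by linarith) h2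
    simp only [hf]
    rw [max_eq_right (by linarith)]; simp
  · intro x hx
    simp only [mem_ofPred_eq] at hx
    have hx0 : 0 < ‖x‖ := by linarith
    refine ContDiffAt.contDiffWithinAt ?_
    have h1 : ContDiffAt ℝ 1 (fun x : EuclideanSpace ℝ (Fin d) => Real.log ‖x‖ - a) x :=
      (((contDiffAt_norm ℝ (norm_pos_iff.1 hx0)).log hx0.ne').sub contDiffAt_const)
    exact aux_contDiff.contDiffAt.comp x h1
  · intro p hp
    have hp1 : 1 < p := hp₀.trans hp
    have hp0 : 0 < p := by linarith
    have hb : (d : ℝ) < p * (1 + α) := (div_lt_iff₀ hβ).1 hp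
    have he : 0 < p * (1 + α) - d := by linarith
    rw [key1 p hp, key2 p hp]
    have hip : 0 ≤ 1 / p := by positivity
    refine ⟨ENNReal.rpow_ne_top_of_nonneg hip ENNReal.ofReal_ne_top,
      ENNReal.rpow_ne_top_of_nonneg hip ENNReal.ofReal_ne_top, ?_⟩
    have hK : 0 < (d * volume.real (Metric.ball (0 : EuclideanSpace ℝ (Fin d)) 1) *
        Real.exp (-(p * (1 + α) - d) * a)) := by positivity
    generalize (d * volume.real (Metric.ball (0 : EuclideanSpace ℝ (Fin d)) 1) *
        Real.exp (-(p * (1 + α) - d) * a)) = K at hK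
    generalize p * (1 + α) - d = ε at he
    have hc : 0 ≤ 1 / 2 * (p / ε) := by positivity
    have hcp : ENNReal.ofReal (1 / 2 * (p / ε)) =
        (ENNReal.ofReal ((1 / 2 * (p / ε)) ^ p)) ^ (1 / p) := by
      rw [ENNReal.ofReal_rpow_of_nonneg (by positivity) hip, ← Real.rpow_mul hc,
        mul_one_div_cancel hp0.ne', Real.rpow_one]
    rw [hcp, ← ENNReal.mul_rpow_of_nonneg _ _ hip, ← ENNReal.ofReal_mul (by positivity)]
    refine ENNReal.rpow_le_rpow (ENNReal.ofReal_le_ofReal ?_) hip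
    have hid : (1 / 2 * (p / ε)) ^ p * (2 ^ p * (K * ((1 / ε) ^ (p + 1) * Real.Gamma (p + 1)))) =
        K * (1 / ε) ^ (2 * p + 1) * (p ^ p * Real.Gamma (p + 1)) := by
      have e1 : (1 / 2 * (p / ε)) ^ p * 2 ^ p = p ^ p * (1 / ε) ^ p := by
        rw [← Real.mul_rpow hc (by norm_num), ← Real.mul_rpow hp0.le (by positivity)]
        congr 1; ring
      have e2 : (1 / ε) ^ (2 * p + 1) = (1 / ε) ^ p * (1 / ε) ^ (p + 1) := by
        rw [← Real.rpow_add (by positivity)]; congr 1; ring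
      rw [e2]
      linear_combination (K * ((1 / ε) ^ (p + 1) * Real.Gamma (p + 1))) * e1
    rw [hid, ← mul_assoc K ((1 / ε) ^ (2 * p + 1)) (Real.Gamma (2 * p + 1))]
    exact mul_le_mul_of_nonneg_left (aux_gamma p hp1) (by positivity)
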